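/- arXiv:1309.5040 — 2 statements merged into one kernel-verified Lean document; each statement's English description precedes it below -/
import Mathlib

section
/- Let d ≥ 1 and k ≥ 0 be integers and let i ≥ 0. For the monomial function g(y) = y^{2k+d−1} on (0, ∞): if i ≤ k, then for every x > 0, ~Δ_d^i g(x) = 4^i · (k!/(k−i)!) · (Γ(k + d/2)/Γ(k − i + d/2)) · x^{2k+d−1−2i}; and if i > k, then ~Δ_d^i g is identically zero on (0, ∞). In particular, ~Δ_d (y ↦ y^n)(x) = (n − d + 1)(n − 1) x^{n−2} for every integer n. -/
/-!
On monomials, `~Δ_d (c y^n) = c (n - d + 1)(n - 1) y^(n - 2)` on `(0, ∞)`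
(`tildeDelta_const_mul_zpow`), and since the operator is local on the open half-line
(`tildeDelta_congr`) this may be iterated. Starting from `n = 2k + d - 1`, passing from the `j`-th to the next iterate
multiplies by `4 (k - j) (k - j - 1 + d/2)`; the first factors telescope to the quotient of
factorials and the second ones to the quotient of Gamma values. The factor `k - j` vanishes at
`j = k`, so that all iterates of order greater than `k` are zero.
-/

open Filter Finset

/-- The operator `~Δ_d g(x) = d/dx ( x^{d-1} · d/dx ( g(x)/x^{d-1} ) )` on functions
of one real variable. -/
noncomputable def tildeDelta (d : ℕ) (g : ℝ → ℝ) (x : ℝ) : ℝ :=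
  deriv (fun y => y ^ (d - 1) * deriv (fun z => g z / z ^ (d - 1)) y) x

lemma tildeDelta_congr (d : ℕ) {g h : ℝ → ℝ} (H : Set.EqOn g h (Set.Ioi 0)) :
    Set.EqOn (tildeDelta d g) (tildeDelta d h) (Set.Ioi 0) := by
  have H' : Set.EqOn (fun z => g z / z ^ (d - 1)) (fun z => h z / z ^ (d - 1)) (Set.Ioi 0) :=
    fun z hz => by simp only [H hz]
  have H'' := H'.deriv isOpen_Ioi
  have H3 : Set.EqOn (fun y => y ^ (d - 1) * deriv (fun z => g z / z ^ (d - 1)) y)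
      (fun y => y ^ (d - 1) * deriv (fun z => h z / z ^ (d - 1)) y) (Set.Ioi 0) :=
    fun y hy => by simp only [H'' hy]
  exact H3.deriv isOpen_Ioi

lemma tildeDelta_const_mul_zpow (d : ℕ) (hd : 1 ≤ d) (c : ℝ) (n : ℤ) {x : ℝ} (hx : 0 < x) :
    tildeDelta d (fun y => c * y ^ n) x
      = c * (((n : ℝ) - (d : ℝ) + 1) * ((n : ℝ) - 1)) * x ^ (n - 2) := by
  obtain ⟨e, rfl⟩ := Nat.exists_eq_add_of_le' hd
  have h1 : Set.EqOn (fun z : ℝ => c * z ^ n / z ^ e) (fun z => c * z ^ (n - e))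
      (Set.Ioi 0) := fun z hz => by
    have hz' : z ≠ 0 := ne_of_gt hz
    simp only [zpow_sub₀ hz', zpow_natCast, mul_div_assoc]
  have h2 : Set.EqOn (fun y : ℝ => y ^ e * deriv (fun z : ℝ => c * z ^ n / z ^ e) y)
      (fun y => c * ((n : ℝ) - e) * y ^ (n - 1)) (Set.Ioi 0) := fun y hy => by
    have hy' : y ≠ 0 := ne_of_gt hy
    have hp : y ^ (n - 1) = y ^ e * y ^ (n - e - 1) := by
      rw [← zpow_natCast, ← zpow_add₀ hy']
      congr 1
      ring
    have hder := h1.deriv isOpen_Ioi hy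
    simp only [deriv_const_mul_field, deriv_zpow] at hder
    simp only [hder, hp]
    push_cast
    ring
  have h3 := h2.deriv isOpen_Ioi (Set.mem_Ioi.2 hx)
  simp only [deriv_const_mul_field, deriv_zpow] at h3
  simp only [tildeDelta, Nat.add_sub_cancel, h3]
  rw [show n - 1 - 1 = n - 2 by ring]
  push_cast
  ring

/-- The exponent is an integer here so that the monomial rule applies uniformly, including at
`i = k`. -/
lemma tildeDelta_iterate_eqOn (d : ℕ) (hd : 1 ≤ d) (k i : ℕ) (hi : i ≤ k) :
    Set.EqOn ((tildeDelta d)^[i] (fun y => y ^ (2 * k + d - 1)))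
      (fun x => 4 ^ i * ((Nat.factorial k : ℝ) / (Nat.factorial (k - i) : ℝ)) *
            (Real.Gamma ((k : ℝ) + (d : ℝ) / 2) /
              Real.Gamma ((k : ℝ) - (i : ℝ) + (d : ℝ) / 2)) *
            x ^ (2 * k + d - 1 - 2 * i : ℤ)) (Set.Ioi 0) := by
  have hd' : (0 : ℝ) < d := by exact_mod_cast hd
  induction i with
  | zero =>
    intro x _
    have h1 : Real.Gamma ((k : ℝ) + (d : ℝ) / 2) ≠ 0 := (Real.Gamma_pos_of_pos (by positivity)).ne'
    have h2 : (Nat.factorial k : ℝ) ≠ 0 := by positivity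
    have h3 : (2 * k + d - 1 - 2 * ((0 : ℕ) : ℤ) : ℤ) = ((2 * k + d - 1 : ℕ) : ℤ) := by omega
    simp only [h3, zpow_natCast]
    simp [h1, h2]
  | succ i ih =>
    intro x hx
    rw [Function.iterate_succ_apply', tildeDelta_congr d (ih (by omega)) hx,
      tildeDelta_const_mul_zpow d hd _ _ hx]
    obtain ⟨m, rfl⟩ := Nat.exists_eq_add_of_le' hi
    have e1 : m + (i + 1) - i = m + 1 := by omega
    have e2 : m + (i + 1) - (i + 1) = m := by omega
    have hG : Real.Gamma ((m : ℝ) + 1 + (d : ℝ) / 2)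
        = ((m : ℝ) + (d : ℝ) / 2) * Real.Gamma ((m : ℝ) + (d : ℝ) / 2) := by
      rw [← Real.Gamma_add_one (by positivity)]
      ring_nf
    have g1 : (((m + (i + 1) : ℕ) : ℝ) - (i : ℝ) + (d : ℝ) / 2) = (m : ℝ) + 1 + (d : ℝ) / 2 := by
      push_cast; ring
    have g2 : (((m + (i + 1) : ℕ) : ℝ) - ((i + 1 : ℕ) : ℝ) + (d : ℝ) / 2)
        = (m : ℝ) + (d : ℝ) / 2 := by
      push_cast; ring
    have hpos : Real.Gamma ((m : ℝ) + (d : ℝ) / 2) ≠ 0 :=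
      (Real.Gamma_pos_of_pos (by positivity)).ne'
    have hm : (m : ℝ) + (d : ℝ) / 2 ≠ 0 := by positivity
    have hex : (2 * ((m + (i + 1) : ℕ) : ℤ) + d - 1 - 2 * (i : ℤ) - 2)
        = 2 * ((m + (i + 1) : ℕ) : ℤ) + d - 1 - 2 * ((i + 1 : ℕ) : ℤ) := by
      push_cast; ring
    simp only [e1, e2, g1, g2, hG, hex]
    congr 1
    generalize Real.Gamma (((m + (i + 1) : ℕ) : ℝ) + (d : ℝ) / 2) = A
    generalize Real.Gamma ((m : ℝ) + (d : ℝ) / 2) = B at *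
    have hf : (Nat.factorial m : ℝ) ≠ 0 := by positivity
    generalize ((m + (i + 1)).factorial : ℝ) = F
    rw [Nat.factorial_succ]
    have hm1 : (m : ℝ) + 1 ≠ 0 := by positivity
    have hm2 : 2 * (m : ℝ) + d ≠ 0 := by positivity
    push_cast
    field_simp
    ring

lemma tildeDelta_iterate_eqOn_zero (d : ℕ) (hd : 1 ≤ d) (k j : ℕ) :
    Set.EqOn ((tildeDelta d)^[k + 1 + j] (fun y => y ^ (2 * k + d - 1)))
      (fun _ => 0) (Set.Ioi 0) := by
  induction j with
  | zero =>
    intro x hx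
    rw [add_zero, Function.iterate_succ_apply',
      tildeDelta_congr d (tildeDelta_iterate_eqOn d hd k k le_rfl) hx,
      tildeDelta_const_mul_zpow d hd _ _ hx]
    push_cast
    ring
  | succ j ih =>
    intro x hx
    rw [← add_assoc, Function.iterate_succ_apply', tildeDelta_congr d ih hx]
    simp [tildeDelta]

theorem statement5 (d : ℕ) (hd : 1 ≤ d) (k : ℕ) :
    (∀ i : ℕ, i ≤ k → ∀ x : ℝ, 0 < x →
      (tildeDelta d)^[i] (fun y => y ^ (2 * k + d - 1)) x
        = 4 ^ i * ((Nat.factorial k : ℝ) / (Nat.factorial (k - i) : ℝ)) *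
            (Real.Gamma ((k : ℝ) + (d : ℝ) / 2) /
              Real.Gamma ((k : ℝ) - (i : ℝ) + (d : ℝ) / 2)) *
            x ^ (2 * k + d - 1 - 2 * i))
    ∧ (∀ i : ℕ, k < i → ∀ x : ℝ, 0 < x →
        (tildeDelta d)^[i] (fun y => y ^ (2 * k + d - 1)) x = 0)
    ∧ (∀ n : ℤ, ∀ x : ℝ, 0 < x →
        tildeDelta d (fun y => y ^ n) x
          = ((n : ℝ) - (d : ℝ) + 1) * ((n : ℝ) - 1) * x ^ (n - 2)) := by
  refine ⟨fun i hi x hx => ?_, fun i hi x hx => ?_, fun n x hx => ?_⟩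
  · have hex : (2 * k + d - 1 - 2 * i : ℤ) = ((2 * k + d - 1 - 2 * i : ℕ) : ℤ) := by omega
    have h := tildeDelta_iterate_eqOn d hd k i hi hx
    simpa only [hex, zpow_natCast] using h
  · obtain ⟨j, rfl⟩ := Nat.exists_eq_add_of_le (Nat.succ_le_of_lt hi)
    exact tildeDelta_iterate_eqOn_zero d hd k j hx
  · simpa using tildeDelta_const_mul_zpow d hd 1 n hx
end

section
/- Let q ≥ 2 be an integer. Then for all integers n ≥ 1 and i ≥ 1, (q+1) · a_{n,i−1} = a_{n+1,i} − (q+1)·a_{n,i} + q·a_{n−1,i}; moreover for every n ≥ 1, a_{n+1,0} = (q+1)·a_{n,0} − q·a_{n−1,0}. -/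
/-!
Put `u = (x - 1)(x - q) / ((q + 1) x)`, so that `(q + 1)(u + 1) = x + q / x`. The generating
polynomial `Pₙ(u) = ∑ₖ a_{n,k} uᵏ` takes the value `xⁿ + qⁿ x⁻ⁿ` there, and multiplying this value
by `x + q / x` gives the three-term recurrence `Pₙ₊₂ = (q + 1)(u + 1) Pₙ₊₁ - q Pₙ`. Every `u ≥ 0`
is attained by some real `x ≠ 0`, so the recurrence is an identity of polynomials; both claims are
comparisons of coefficients.
-/

open Polynomial in
/-- The polynomial `Pₙ` whose `k`-th coefficient is `a n k` for `k ≤ n`. -/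
noncomputable def rowPoly (a : ℕ → ℕ → ℝ) (n : ℕ) : ℝ[X] :=
  ∑ k ∈ Finset.range (n + 1), C (a n k) * X ^ k

theorem rowPoly_coeff (a : ℕ → ℕ → ℝ) (ha0 : ∀ n k : ℕ, n < k → a n k = 0) (n i : ℕ) :
    (rowPoly a n).coeff i = a n i := by
  simp only [rowPoly, Polynomial.finsetSum_coeff, Polynomial.coeff_C_mul_X_pow,
    Finset.sum_ite_eq, Finset.mem_range]
  split_ifs with h
  · rfl
  · exact (ha0 n i (by omega)).symm

/-- Solving `x + q / x = (q + 1)(u + 1)` for `x`: the discriminant is nonnegative because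
`(q + 1)² ≥ 4 q`. -/
theorem exists_param (q u : ℝ) (hq : 0 < q) (hu : 0 ≤ u) :
    ∃ x : ℝ, x ≠ 0 ∧ (x - 1) * (x - q) = u * ((q + 1) * x) := by
  have hs : q + 1 ≤ (q + 1) * (u + 1) := by nlinarith
  have hd : 0 ≤ ((q + 1) * (u + 1)) ^ 2 - 4 * q := by
    nlinarith [sq_nonneg (q - 1)]
  have h1 := Real.sq_sqrt hd
  have h2 := Real.sqrt_nonneg (((q + 1) * (u + 1)) ^ 2 - 4 * q)
  refine ⟨((q + 1) * (u + 1) + √(((q + 1) * (u + 1)) ^ 2 - 4 * q)) / 2, by positivity, ?_⟩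
  linear_combination h1 / 4

open Polynomial in
theorem rowPoly_rec (q : ℕ) (hq : 2 ≤ q) (a : ℕ → ℕ → ℝ)
    (ha : ∀ n : ℕ, ∀ x : ℝ, x ≠ 0 →
      x ^ (n : ℤ) + (q : ℝ) ^ n * x ^ (-(n : ℤ))
        = ∑ k ∈ Finset.range (n + 1),
            a n k * ((x - 1) * (x - (q : ℝ))) ^ k / (((q : ℝ) + 1) ^ k * x ^ k)) (n : ℕ) :
    rowPoly a (n + 2) =
      C ((q : ℝ) + 1) * (rowPoly a (n + 1) * X) + C ((q : ℝ) + 1) * rowPoly a (n + 1)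
        - C (q : ℝ) * rowPoly a n := by
  have hq0 : (0 : ℝ) < q := by exact_mod_cast (by omega : 0 < q)
  apply Polynomial.eq_of_infinite_eval_eq
  refine (Set.Ici_infinite (0 : ℝ)).mono fun u hu => ?_
  obtain ⟨x, hx, hxu⟩ := exists_param q u hq0 hu
  have hq1 : (q : ℝ) + 1 ≠ 0 := by positivity
  have key : ∀ m : ℕ, (rowPoly a m).eval u = x ^ m + (q : ℝ) ^ m * (x⁻¹) ^ m := by
    intro m
    have h := ha m x hx
    rw [zpow_neg, zpow_natCast, ← inv_pow] at h
    rw [h, rowPoly, eval_finsetSum]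
    refine Finset.sum_congr rfl fun k _ => ?_
    rw [hxu, mul_pow, mul_pow]
    simp only [eval_mul, eval_C, eval_pow, eval_X]
    field_simp
  have hsum : ((q : ℝ) + 1) * (u + 1) = x + q * x⁻¹ := by
    field_simp
    linear_combination -hxu
  have hinv : x * x⁻¹ = 1 := mul_inv_cancel₀ hx
  simp only [Set.mem_setOf_eq, eval_sub, eval_add, eval_mul, eval_C, eval_X, key]
  linear_combination (-(x ^ (n + 1) + (q : ℝ) ^ (n + 1) * (x⁻¹) ^ (n + 1))) * hsum
    - (q * x ^ n + (q : ℝ) ^ (n + 1) * (x⁻¹) ^ n) * hinv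


theorem statement11 (q : ℕ) (hq : 2 ≤ q) (a : ℕ → ℕ → ℝ)
    (ha : ∀ n : ℕ, ∀ x : ℝ, x ≠ 0 →
      x ^ (n : ℤ) + (q : ℝ) ^ n * x ^ (-(n : ℤ))
        = ∑ k ∈ Finset.range (n + 1),
            a n k * ((x - 1) * (x - (q : ℝ))) ^ k / (((q : ℝ) + 1) ^ k * x ^ k))
    (ha0 : ∀ n k : ℕ, n < k → a n k = 0) :
    (∀ n : ℕ, 1 ≤ n → ∀ i : ℕ, 1 ≤ i →
      ((q : ℝ) + 1) * a n (i - 1)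
        = a (n + 1) i - ((q : ℝ) + 1) * a n i + (q : ℝ) * a (n - 1) i)
    ∧ (∀ n : ℕ, 1 ≤ n →
        a (n + 1) 0 = ((q : ℝ) + 1) * a n 0 - (q : ℝ) * a (n - 1) 0) := by
  have hrec := rowPoly_rec q hq a ha
  have hc := rowPoly_coeff a ha0
  constructor
  · intro n hn i hi
    obtain ⟨n, rfl⟩ := Nat.exists_eq_add_of_le' hn
    obtain ⟨i, rfl⟩ := Nat.exists_eq_add_of_le' hi
    have h := congrArg (fun p => Polynomial.coeff p (i + 1)) (hrec n)
    simp only [Polynomial.coeff_sub, Polynomial.coeff_add, Polynomial.coeff_C_mul,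
      Polynomial.coeff_mul_X, hc] at h
    simp only [Nat.add_sub_cancel]
    linear_combination -h
  · intro n hn
    obtain ⟨n, rfl⟩ := Nat.exists_eq_add_of_le' hn
    have h := congrArg (fun p => Polynomial.coeff p 0) (hrec n)
    simp only [Polynomial.coeff_sub, Polynomial.coeff_add, Polynomial.coeff_C_mul,
      Polynomial.coeff_mul_X_zero, hc] at h
    simp only [Nat.add_sub_cancel]
    linear_combination h
end
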